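/- arXiv:2205.00128 — 2 statements merged into one kernel-verified Lean document; each statement's English description precedes it below -/
import Mathlib

section
/- Let n ≥ 2 be an integer, let λ be a real with −2/√(n+2) < λ ≤ 0, and set A = ((−λ + √(λ² + 4n))/2)·√(λ² + 4n). Let w : [0, 1] → ℝ be C² and satisfy the Legendre-type equation (1 − ξ²)·w''(ξ) = n·ξ·w'(ξ) − A·w(ξ) for all ξ ∈ [0, 1], with w(1) = 1 and w'(1) = A/n. Then w(0) < 0 and w'(0) > 0. -/
open Real Set

/-!
The derivative `u = w'` solves the Gegenbauer equation
`((1 - x²)^(n/2 + 1) u')' = -(A - n) (1 - x²)^(n/2) u`, which the function `x` solves with `n + 2`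
in place of `A - n`. The number `A - n` is the square of the radius `ρ` of the round sphere, and
the lower bound on `λ` says exactly that `ρ² < n + 2`. Hence `0 < A - n < n + 2`, and `u` can be
compared with `x`, starting from `u(1) > 0`: as long as `u > 0` on `(η, 1)`, integrating the
equation gives `u'(η) > 0`, and integrating the Wronskian of `u` and `x` gives
`u(η) > η u'(η) ≥ 0`. So `u > 0` on `[0, 1]`, and `-A w(0) = u'(0) > 0`.
-/

section SphereRadius

variable {ν : ℝ}

/-- The radius `ρ` of the round-sphere solution of the `λ`-hypersurface equation: the positive root
of `ρ² + λ ρ = ν`, where `ν` is the dimension. -/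
noncomputable def sphereRadius (ν lam : ℝ) : ℝ :=
  (-lam + √(lam ^ 2 + 4 * ν)) / 2

lemma sphereRadius_mul_add (hν : 0 ≤ ν) (lam : ℝ) :
    sphereRadius ν lam * (sphereRadius ν lam + lam) = ν := by
  have hsq : √(lam ^ 2 + 4 * ν) ^ 2 = lam ^ 2 + 4 * ν := sq_sqrt (by positivity)
  unfold sphereRadius
  linear_combination hsq / 4

lemma sphereRadius_pos (hν : 0 < ν) (lam : ℝ) : 0 < sphereRadius ν lam := by
  have : lam < √(lam ^ 2 + 4 * ν) := lt_sqrt_of_sq_lt (by linarith)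
  unfold sphereRadius
  linarith

lemma sphereRadius_mul_sqrt (hν : 0 ≤ ν) (lam : ℝ) :
    sphereRadius ν lam * √(lam ^ 2 + 4 * ν) = ν + sphereRadius ν lam ^ 2 := by
  have hsqrt : √(lam ^ 2 + 4 * ν) = 2 * sphereRadius ν lam + lam := by
    unfold sphereRadius
    ring
  rw [hsqrt]
  linear_combination sphereRadius_mul_add hν lam

lemma sphereRadius_sq_lt_add_two_iff (hν : 0 < ν) {lam : ℝ} :
    sphereRadius ν lam ^ 2 < ν + 2 ↔ -2 / √(ν + 2) < lam := by
  have hρ := sphereRadius_pos hν lam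
  have hroot := sphereRadius_mul_add hν.le lam
  set ρ := sphereRadius ν lam
  have ht : 0 < √(ν + 2) := sqrt_pos.2 (by positivity)
  have ht_sq : √(ν + 2) ^ 2 = ν + 2 := sq_sqrt (by positivity)
  have hρ_add : 0 < ρ + lam := pos_of_mul_pos_right (hroot.symm ▸ hν) hρ.le
  have hfactor : (√(ν + 2) - ρ) * (√(ν + 2) + (ρ + lam)) = lam * √(ν + 2) - -2 := by
    linear_combination ht_sq - hroot
  rw [← lt_sqrt hρ.le, div_lt_iff₀ ht, ← sub_pos, ← sub_pos (b := (-2 : ℝ)), ← hfactor,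
    mul_pos_iff_of_pos_right (add_pos ht hρ_add)]

lemma sphereRadius_mul_sqrt_mem_Ioo (hν : 0 < ν) {lam : ℝ} (hlam : -2 / √(ν + 2) < lam) :
    sphereRadius ν lam * √(lam ^ 2 + 4 * ν) ∈ Ioo ν (2 * ν + 2) := by
  have hρ := pow_pos (sphereRadius_pos hν lam) 2
  have hρ_lt := (sphereRadius_sq_lt_add_two_iff hν).2 hlam
  rw [sphereRadius_mul_sqrt hν.le]
  constructor <;> linarith

end SphereRadius

lemma forall_mem_Icc_lt_of_forall_Ioo_lt {α β : Type*} [LinearOrder α] [TopologicalSpace α]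
    [OrderTopology α] [CompactIccSpace α] [LinearOrder β] [TopologicalSpace β]
    [OrderClosedTopology β] {a b : α} {f : α → β} {c : β} (hf : ContinuousOn f (Icc a b))
    (hb : c < f b) (hstep : ∀ η ∈ Ico a b, (∀ x ∈ Ioo η b, c < f x) → c < f η) :
    ∀ x ∈ Icc a b, c < f x := by
  by_contra! ⟨x, hx, hfx⟩
  have hcompact : IsCompact (Icc a b ∩ f ⁻¹' Iic c) :=
    isCompact_Icc.of_isClosed_subset
      (hf.preimage_isClosed_of_isClosed isClosed_Icc isClosed_Iic) inter_subset_left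
  obtain ⟨η, ⟨hη, hfη⟩, hmax⟩ := hcompact.exists_isGreatest ⟨x, hx, hfx⟩
  have hηb : η < b := hη.2.lt_of_ne fun h => (h ▸ hb).not_ge hfη
  refine (hstep η ⟨hη.1, hηb⟩ fun y hy => ?_).not_ge hfη
  by_contra! hfy
  exact hy.1.not_ge (hmax ⟨⟨hη.1.trans hy.1.le, hy.2.le⟩, hfy⟩)

section Weight

variable {x : ℝ}

lemma one_sub_sq_pos_of_mem_Ico (hx : x ∈ Ico (0 : ℝ) 1) : 0 < 1 - x ^ 2 :=
  sub_pos.2 (pow_lt_one₀ hx.1 hx.2 two_ne_zero)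

/-- The Gegenbauer weight `(1 - x²)^(ν/2)`. -/
noncomputable def gegenbauerWeight (ν x : ℝ) : ℝ :=
  (1 - x ^ 2) ^ (ν / 2)

variable {ν : ℝ}

lemma continuous_gegenbauerWeight (hν : 0 ≤ ν) : Continuous (gegenbauerWeight ν) :=
  Continuous.rpow_const (by fun_prop) fun _ => Or.inr (by positivity)

lemma gegenbauerWeight_one (hν : ν ≠ 0) : gegenbauerWeight ν 1 = 0 := by
  simp [gegenbauerWeight, hν]

lemma gegenbauerWeight_pos (hx : x ∈ Ico (0 : ℝ) 1) : 0 < gegenbauerWeight ν x :=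
  rpow_pos_of_pos (one_sub_sq_pos_of_mem_Ico hx) _

lemma hasDerivAt_one_sub_sq (x : ℝ) : HasDerivAt (fun y : ℝ => 1 - y ^ 2) (-(2 * x)) x := by
  simpa using (hasDerivAt_pow 2 x).const_sub 1

lemma hasDerivAt_gegenbauerWeight (hx : x ∈ Ico (0 : ℝ) 1) :
    HasDerivAt (gegenbauerWeight ν) (-(ν * x / (1 - x ^ 2)) * gegenbauerWeight ν x) x := by
  have hpos := one_sub_sq_pos_of_mem_Ico hx
  refine ((hasDerivAt_one_sub_sq x).rpow_const (p := ν / 2) (Or.inl hpos.ne')).congr_deriv ?_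
  rw [rpow_sub_one hpos.ne', gegenbauerWeight]
  ring

end Weight

/-- `u` solves the Gegenbauer equation `(1 - x²) u'' = (ν + 2) x u' - μ u` on `(0, 1)`, written as a
first-order system with `v = (1 - x²) u'`, and both `u` and `v` extend continuously to `[0, 1]`;
at the singular point `x = 1` nothing else is required. -/
structure IsGegenbauerPair (ν μ : ℝ) (u v : ℝ → ℝ) : Prop where
  continuousOn_fst : ContinuousOn u (Icc 0 1)
  continuousOn_snd : ContinuousOn v (Icc 0 1)
  hasDerivAt_fst : ∀ x ∈ Ioo (0 : ℝ) 1, HasDerivAt u (v x / (1 - x ^ 2)) x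
  hasDerivAt_snd : ∀ x ∈ Ioo (0 : ℝ) 1, HasDerivAt v (ν * x * v x / (1 - x ^ 2) - μ * u x) x

namespace IsGegenbauerPair

variable {ν μ x η : ℝ} {u v : ℝ → ℝ}

lemma hasDerivAt_weight_mul_snd (h : IsGegenbauerPair ν μ u v) (hx : x ∈ Ioo (0 : ℝ) 1) :
    HasDerivAt (fun y => gegenbauerWeight ν y * v y) (-μ * (gegenbauerWeight ν x * u x)) x := by
  refine ((hasDerivAt_gegenbauerWeight (Ioo_subset_Ico_self hx)).mul
    (h.hasDerivAt_snd x hx)).congr_deriv ?_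
  ring

/-- Up to the factor `gegenbauerWeight ν x * (1 - x ^ 2)`, the differentiated function is the
Wronskian `x u' - u` of `u` with the solution `x` for the parameter `μ = ν + 2`. -/
lemma hasDerivAt_weight_mul_wronskian (h : IsGegenbauerPair ν μ u v) (hx : x ∈ Ioo (0 : ℝ) 1) :
    HasDerivAt (fun y => gegenbauerWeight ν y * (y * v y - (1 - y ^ 2) * u y))
      ((ν + 2 - μ) * (x * (gegenbauerWeight ν x * u x))) x := by
  have hx' := Ioo_subset_Ico_self hx
  have hpos := one_sub_sq_pos_of_mem_Ico hx'
  refine ((hasDerivAt_gegenbauerWeight hx').mul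
    (((hasDerivAt_id' x).mul (h.hasDerivAt_snd x hx)).sub
      ((hasDerivAt_one_sub_sq x).mul (h.hasDerivAt_fst x hx)))).congr_deriv ?_
  simp only [Pi.mul_apply, Pi.sub_apply]
  field_simp
  ring

lemma snd_pos (h : IsGegenbauerPair ν μ u v) (hν : 0 < ν) (hμ : 0 < μ) (hη : η ∈ Ico (0 : ℝ) 1)
    (hu : ∀ x ∈ Ioo η 1, 0 < u x) : 0 < v η := by
  have hanti : StrictAntiOn (fun x => gegenbauerWeight ν x * v x) (Icc η 1) := by
    refine strictAntiOn_of_deriv_neg (convex_Icc _ _)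
      ((continuous_gegenbauerWeight hν.le).continuousOn.mul
        (h.continuousOn_snd.mono (Icc_subset_Icc_left hη.1))) fun x hx => ?_
    rw [interior_Icc] at hx
    have hx' : x ∈ Ioo (0 : ℝ) 1 := Ioo_subset_Ioo_left hη.1 hx
    rw [(h.hasDerivAt_weight_mul_snd hx').deriv]
    exact mul_neg_of_neg_of_pos (neg_lt_zero.2 hμ)
      (mul_pos (gegenbauerWeight_pos (Ioo_subset_Ico_self hx')) (hu x hx))
  have hlt := hanti (left_mem_Icc.2 hη.2.le) (right_mem_Icc.2 hη.2.le) hη.2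
  simp only [gegenbauerWeight_one hν.ne', zero_mul] at hlt
  exact (mul_pos_iff_of_pos_left (gegenbauerWeight_pos hη)).1 hlt

lemma mul_snd_lt (h : IsGegenbauerPair ν μ u v) (hν : 0 < ν) (hμ : μ < ν + 2)
    (hη : η ∈ Ico (0 : ℝ) 1) (hu : ∀ x ∈ Ioo η 1, 0 < u x) : η * v η < (1 - η ^ 2) * u η := by
  have hsub : Icc η 1 ⊆ Icc (0 : ℝ) 1 := Icc_subset_Icc_left hη.1
  have hmono : StrictMonoOn (fun x => gegenbauerWeight ν x * (x * v x - (1 - x ^ 2) * u x))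
      (Icc η 1) := by
    refine strictMonoOn_of_deriv_pos (convex_Icc _ _)
      ((continuous_gegenbauerWeight hν.le).continuousOn.mul
        ((continuousOn_id.mul (h.continuousOn_snd.mono hsub)).sub
          (ContinuousOn.mul (by fun_prop) (h.continuousOn_fst.mono hsub)))) fun x hx => ?_
    rw [interior_Icc] at hx
    have hx' : x ∈ Ioo (0 : ℝ) 1 := Ioo_subset_Ioo_left hη.1 hx
    rw [(h.hasDerivAt_weight_mul_wronskian hx').deriv]
    exact mul_pos (sub_pos.2 hμ)
      (mul_pos hx'.1 (mul_pos (gegenbauerWeight_pos (Ioo_subset_Ico_self hx')) (hu x hx)))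
  have hlt := hmono (left_mem_Icc.2 hη.2.le) (right_mem_Icc.2 hη.2.le) hη.2
  simp only [gegenbauerWeight_one hν.ne', zero_mul] at hlt
  exact sub_neg.1 (neg_of_mul_neg_right hlt (gegenbauerWeight_pos hη).le)

lemma fst_pos (h : IsGegenbauerPair ν μ u v) (hν : 0 < ν) (hμ₀ : 0 < μ) (hμ : μ < ν + 2)
    (hu : 0 < u 1) : ∀ x ∈ Icc (0 : ℝ) 1, 0 < u x := by
  refine forall_mem_Icc_lt_of_forall_Ioo_lt h.continuousOn_fst hu fun η hη hpos => ?_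
  have hv : 0 ≤ η * v η := mul_nonneg hη.1 (h.snd_pos hν hμ₀ hη hpos).le
  exact (mul_pos_iff_of_pos_left (one_sub_sq_pos_of_mem_Ico hη)).1
    (hv.trans_lt (h.mul_snd_lt hν hμ hη hpos))

end IsGegenbauerPair

section OneSidedDerivative

variable {E : Type*} [NormedAddCommGroup E] [NormedSpace ℝ E] {f : ℝ → E} {a b : ℝ}

lemma derivWithin_Icc_eqOn_deriv : EqOn (derivWithin f (Icc a b)) (deriv f) (Ioo a b) :=
  fun _ hx => derivWithin_of_mem_nhds (Icc_mem_nhds hx.1 hx.2)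

lemma derivWithin_Icc_left_eq_deriv (hab : a < b) (hf : ContDiffOn ℝ 1 f (Icc a b))
    (hcont : ContinuousAt (deriv f) a) : derivWithin f (Icc a b) a = deriv f a := by
  have hwithin := (hf.continuousOn_derivWithin (uniqueDiffOn_Icc hab) le_rfl).continuousWithinAt
    (left_mem_Icc.2 hab.le)
  have : (nhdsWithin a (Ioo a b)).NeBot := by
    rw [nhdsWithin_Ioo_eq_nhdsGT hab]
    infer_instance
  exact tendsto_nhds_unique
    ((hwithin.mono Ioo_subset_Icc_self).congr' derivWithin_Icc_eqOn_deriv.eventuallyEq_nhdsWithin)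
    hcont.continuousWithinAt

end OneSidedDerivative

lemma isGegenbauerPair_of_legendre {ν A : ℝ} {w : ℝ → ℝ} (hC2 : ContDiffOn ℝ 2 w (Icc 0 1))
    (hode : ∀ ξ ∈ Ioo (0 : ℝ) 1,
      (1 - ξ ^ 2) * deriv (deriv w) ξ = ν * ξ * deriv w ξ - A * w ξ) :
    IsGegenbauerPair ν (A - ν) (derivWithin w (Icc 0 1))
      (fun ξ => ν * ξ * derivWithin w (Icc 0 1) ξ - A * w ξ) := by
  have hC1 : ContDiffOn ℝ 1 (derivWithin w (Icc 0 1)) (Icc 0 1) :=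
    hC2.derivWithin (uniqueDiffOn_Icc zero_lt_one) (by norm_num)
  have hcont_w := hC2.continuousOn
  have hcont_w' := hC1.continuousOn
  have hderiv_w : ∀ x ∈ Ioo (0 : ℝ) 1, HasDerivAt w (derivWithin w (Icc 0 1) x) x := by
    intro x hx
    rw [derivWithin_Icc_eqOn_deriv hx]
    exact ((hC2.contDiffAt (Icc_mem_nhds hx.1 hx.2)).differentiableAt two_ne_zero).hasDerivAt
  have hderiv_w' : ∀ x ∈ Ioo (0 : ℝ) 1, HasDerivAt (derivWithin w (Icc 0 1))
      ((ν * x * derivWithin w (Icc 0 1) x - A * w x) / (1 - x ^ 2)) x := by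
    intro x hx
    refine ((hC1.contDiffAt (Icc_mem_nhds hx.1 hx.2)).differentiableAt
      one_ne_zero).hasDerivAt.congr_deriv ?_
    rw [(derivWithin_Icc_eqOn_deriv.eventuallyEq_of_mem (isOpen_Ioo.mem_nhds hx)).deriv_eq,
      derivWithin_Icc_eqOn_deriv hx,
      eq_div_iff (one_sub_sq_pos_of_mem_Ico (Ioo_subset_Ico_self hx)).ne', mul_comm, hode x hx]
  refine ⟨hcont_w', by fun_prop, hderiv_w', fun x hx => ?_⟩
  refine ((((hasDerivAt_id' x).const_mul ν).mul (hderiv_w' x hx)).sub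
    ((hderiv_w x hx).const_mul A)).congr_deriv ?_
  ring

theorem legendre_sign_at_zero_general {ν A : ℝ} (hν : 0 < ν) (hA₁ : ν < A) (hA₂ : A < 2 * ν + 2)
    {w : ℝ → ℝ} (hC2 : ContDiffOn ℝ 2 w (Icc 0 1))
    (hode : ∀ ξ ∈ Ico (0 : ℝ) 1,
      (1 - ξ ^ 2) * deriv (deriv w) ξ = ν * ξ * deriv w ξ - A * w ξ)
    (hw1' : 0 < deriv w 1) :
    w 0 < 0 ∧ 0 < deriv w 0 := by
  have hpair := isGegenbauerPair_of_legendre hC2 fun ξ hξ => hode ξ (Ioo_subset_Ico_self hξ)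
  have hderiv_one : derivWithin w (Icc 0 1) 1 = deriv w 1 :=
    (differentiableAt_of_deriv_ne_zero hw1'.ne').derivWithin
      (uniqueDiffOn_Icc zero_lt_one 1 (right_mem_Icc.2 zero_le_one))
  have hpos : ∀ ξ ∈ Icc (0 : ℝ) 1, 0 < derivWithin w (Icc 0 1) ξ :=
    hpair.fst_pos hν (sub_pos.2 hA₁) (by linarith) (hderiv_one ▸ hw1')
  have hsnd := hpair.snd_pos hν (sub_pos.2 hA₁) (left_mem_Ico.2 zero_lt_one)
    fun x hx => hpos x (Ioo_subset_Icc_self hx)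
  have hw0 : w 0 < 0 := neg_of_mul_neg_right (by linarith : A * w 0 < 0) (hν.trans hA₁).le
  -- `deriv` is two-sided and could be the junk value `0` at `0`; since the equation makes `w''(0)`
  -- nonzero, `deriv w` is differentiable there, so its value is the limit from the right.
  have hderiv2 : deriv (deriv w) 0 ≠ 0 := by
    have hode0 := hode 0 (left_mem_Ico.2 zero_lt_one)
    have := mul_neg_of_pos_of_neg (hν.trans hA₁) hw0
    linarith
  have hderiv_zero : derivWithin w (Icc 0 1) 0 = deriv w 0 :=
    derivWithin_Icc_left_eq_deriv zero_lt_one (hC2.of_le one_le_two)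
      (differentiableAt_of_deriv_ne_zero hderiv2).continuousAt
  exact ⟨hw0, hderiv_zero ▸ hpos 0 (left_mem_Icc.2 zero_le_one)⟩

/-- Lemma 3.4 after the substitution `ξ = cos φ`: for `-2/√(n+2) < λ ≤ 0` and
`A = ((-λ+√(λ²+4n))/2)·√(λ²+4n)`, the solution of the Legendre-type equation
`(1-ξ²) w'' = n ξ w' - A w` on `[0,1]` with `w(1) = 1` and `w'(1) = A/n` satisfies
`w(0) < 0` and `w'(0) > 0`. -/
theorem legendre_sign_at_zero
    (n : ℕ) (hn : 2 ≤ n) (lam : ℝ)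
    (hlam₁ : -2 / Real.sqrt ((n : ℝ) + 2) < lam) (hlam₂ : lam ≤ 0)
    (A : ℝ)
    (hA : A = ((-lam + Real.sqrt (lam ^ 2 + 4 * n)) / 2) * Real.sqrt (lam ^ 2 + 4 * n))
    (w : ℝ → ℝ)
    (hC2 : ContDiffOn ℝ 2 w (Icc 0 1))
    (hode : ∀ ξ ∈ Icc (0 : ℝ) 1,
      (1 - ξ ^ 2) * deriv (deriv w) ξ = (n : ℝ) * ξ * deriv w ξ - A * w ξ)
    (hw1 : w 1 = 1) (hw1' : deriv w 1 = A / n) :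
    w 0 < 0 ∧ deriv w 0 > 0 := by
  have hn₀ : (0 : ℝ) < n := Nat.cast_pos.2 (two_pos.trans_le hn)
  obtain ⟨hA₁, hA₂⟩ : A ∈ Ioo (n : ℝ) (2 * n + 2) := hA ▸ sphereRadius_mul_sqrt_mem_Ioo hn₀ hlam₁
  exact legendre_sign_at_zero_general hn₀ hA₁ hA₂ hC2
    (fun ξ hξ => hode ξ (Ico_subset_Icc_self hξ)) (hw1' ▸ div_pos (hn₀.trans hA₁) hn₀)
end

section
/- Let n ≥ 2 be an integer, λ ≤ 0, r > 0, and let h be a real-valued function twice differentiable at r satisfying, at the point r: the equation h''/(1 + h'²) = (r − (n−1)/r)·h' − h + λ·(1 − √(1 + h'²)), together with h''(r) ≤ 0 and −1 ≤ h'(r) ≤ 0. Then h''(r) − 2r·h'(r) ≥ −2·h(r); equivalently, (d/dr)(e^{−r²} h'(r)) ≥ −2 e^{−r²} h(r) at r. -/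
open Real Set

/-!
For `λ ≤ 0` and `h' ≤ 0`, the terms `-((n - 1) / r) h'` and `λ (1 - √(1 + h'²))` of the profile
equation are nonnegative, so `h'' / (1 + h'²) ≥ r h' - h`. The factor `2` comes from
`1 + h'² ≤ 2`: as `h'' ≤ 0`, enlarging the denominator to `2` only increases the quotient.
-/

lemma mul_sub_le_shifted_profile_rhs {m lam r p : ℝ} (y : ℝ) (hm : 1 ≤ m) (hlam : lam ≤ 0)
    (hr : 0 < r) (hp : p ≤ 0) :
    r * p - y ≤ (r - (m - 1) / r) * p - y + lam * (1 - √(1 + p ^ 2)) := by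
  have drift_nonpos : (m - 1) / r * p ≤ 0 :=
    mul_nonpos_of_nonneg_of_nonpos (div_nonneg (sub_nonneg.2 hm) hr.le) hp
  have one_le_sqrt : 1 ≤ √(1 + p ^ 2) := Real.one_le_sqrt.2 (le_add_of_nonneg_right (sq_nonneg p))
  have forcing_nonneg : 0 ≤ lam * (1 - √(1 + p ^ 2)) :=
    mul_nonneg_of_nonpos_of_nonpos hlam (sub_nonpos.2 one_le_sqrt)
  linarith

lemma div_le_div_of_nonpos_of_pos_of_le {K : Type*} [Field K] [LinearOrder K]
    [IsStrictOrderedRing K] {a b c : K} (ha : a ≤ 0) (hb : 0 < b) (hbc : b ≤ c) :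
    a / b ≤ a / c := by
  simpa only [div_eq_mul_inv] using mul_le_mul_of_nonpos_left (inv_anti₀ hb hbc) ha

/-- Only the 2-jet of the profile at `r` enters: `(y, p, q)` stands for `(h r, h' r, h'' r)`, and
`m` for the dimension `n`. -/
theorem pointwise_exp_derivative_bound_general {m lam r y p q : ℝ}
    (hm : 1 ≤ m) (hlam : lam ≤ 0) (hr : 0 < r)
    (hprofile : (r - (m - 1) / r) * p - y + lam * (1 - √(1 + p ^ 2)) ≤ q / (1 + p ^ 2))
    (hq : q ≤ 0) (hp_lower : -1 ≤ p) (hp : p ≤ 0) :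
    -2 * y ≤ q - 2 * r * p := by
  have sq_le_one : p ^ 2 ≤ 1 :=
    (sq_le_one_iff_abs_le_one p).2 (abs_le.2 ⟨hp_lower, hp.trans zero_le_one⟩)
  have half_bound : r * p - y ≤ q / 2 := calc
    r * p - y ≤ (r - (m - 1) / r) * p - y + lam * (1 - √(1 + p ^ 2)) :=
      mul_sub_le_shifted_profile_rhs y hm hlam hr hp
    _ ≤ q / (1 + p ^ 2) := hprofile
    _ ≤ q / 2 :=
      div_le_div_of_nonpos_of_pos_of_le hq (by positivity) (by linarith)
  linarith

/-- A pointwise differential inequality from the proof of Lemma 3.1: for `λ ≤ 0` and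
`r > 0`, if `h` satisfies the shifted profile equation
`h''/(1+h'²) = (r - (n-1)/r) h' - h + λ(1 - √(1+h'²))` at `r` with `h''(r) ≤ 0` and
`-1 ≤ h'(r) ≤ 0`, then `h''(r) - 2 r h'(r) ≥ -2 h(r)`. -/
theorem pointwise_exp_derivative_bound
    (n : ℕ) (hn : 2 ≤ n) (lam : ℝ) (hlam : lam ≤ 0)
    (r : ℝ) (hr : 0 < r)
    (h : ℝ → ℝ)
    (hd1 : DifferentiableAt ℝ h r) (hd2 : DifferentiableAt ℝ (deriv h) r)
    (heq : deriv (deriv h) r / (1 + (deriv h r) ^ 2) =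
      (r - ((n : ℝ) - 1) / r) * deriv h r - h r
        + lam * (1 - Real.sqrt (1 + (deriv h r) ^ 2)))
    (hconc : deriv (deriv h) r ≤ 0)
    (hslope₁ : -1 ≤ deriv h r) (hslope₂ : deriv h r ≤ 0) :
    deriv (deriv h) r - 2 * r * deriv h r ≥ -2 * h r :=
  pointwise_exp_derivative_bound_general (Nat.one_le_cast.2 (one_le_two.trans hn)) hlam hr
    heq.ge hconc hslope₁ hslope₂
end
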